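/- Let μ be the measure on ℝⁿ given by dμ(x)=φ(x)dx, where φ is radially decreasing and p-concave with −1/n ≤ p ≤ ∞. Let λ∈(0,1), let H be a linear hyperplane of ℝⁿ, and let A,B⊆ℝⁿ be measurable sets such that (1−λ)A+λB is also measurable and sup_{y∈H^⊥} μ̃_{n−1}(A∩(y+H)) ≥ sup_{y∈H^⊥} μ̃_{n−1}(B∩(y+H)). Suppose there exists t₀ ≥ 1 such that sup_{y∈H^⊥} μ̃_{n−1}(A∩(y+H)) = sup_{y∈H^⊥} μ̃_{n−1}((t₀B)∩(y+H)). Then μ((1−λ)A+λB)^{1/n} ≥ (1−λ)μ(A)^{1/n} + λ·μ(t₀B)^{1/n}/t₀. -/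

import Mathlib

open MeasureTheory Set Metric Filter
open scoped ENNReal NNReal Topology Pointwise

noncomputable section

/-- The `d`-convex combination `(1-λ)A ⋆_d λB` of two sets. -/
def starComb {Z : Type*} (d : Z → Z → ℝ) (lam : ℝ) (A B : Set Z) : Set Z :=
  {z | ∃ a ∈ A, ∃ b ∈ B, d z a = lam * d a b ∧ d z b = (1 - lam) * d a b}

/-- A distance is strictly intrinsic: closed balls of radii summing to the distance
between their centers intersect. -/
def StrictlyIntrinsicDist {Z : Type*} (d : Z → Z → ℝ) : Prop :=
  ∀ x y : Z, ∀ r₁ r₂ : ℝ, 0 ≤ r₁ → 0 ≤ r₂ → r₁ + r₂ = d x y →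
    ∃ z : Z, d z x ≤ r₁ ∧ d z y ≤ r₂

/-- The ℓ² (Euclidean) product metric on `X × Y`. -/
def rho {X Y : Type*} [PseudoMetricSpace X] [PseudoMetricSpace Y] (a b : X × Y) : ℝ :=
  Real.sqrt (dist a.1 b.1 ^ 2 + dist a.2 b.2 ^ 2)

/-- The ℓ² (Euclidean) metric on a finite product of copies of a metric space. -/
def rhoPi {ι : Type*} [Fintype ι] {X : Type*} [PseudoMetricSpace X] (a b : ι → X) : ℝ :=
  Real.sqrt (∑ i, dist (a i) (b i) ^ 2)

open Classical in
/-- The `p`-th mean `M_p(a,b,λ)` of `a, b ∈ [0,∞]`, for `p ∈ ℝ ∪ {±∞}`, with the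
convention that it vanishes whenever `a * b = 0`. -/
def Mp (p : EReal) (lam : ℝ) (a b : ℝ≥0∞) : ℝ≥0∞ :=
  if a = 0 ∨ b = 0 then 0
  else if p = ⊤ then max a b
  else if p = ⊥ then min a b
  else if p = 0 then a ^ (1 - lam) * b ^ lam
  else (ENNReal.ofReal (1 - lam) * a ^ p.toReal + ENNReal.ofReal lam * b ^ p.toReal) ^ (1 / p.toReal)

open Classical in
/-- The `p`-th mean `M_p(a,b,λ)` of nonnegative reals, with the zero convention. -/
def MpR (p : EReal) (lam a b : ℝ) : ℝ :=
  if a = 0 ∨ b = 0 then 0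
  else if p = ⊤ then max a b
  else if p = ⊥ then min a b
  else if p = 0 then a ^ (1 - lam) * b ^ lam
  else ((1 - lam) * a ^ p.toReal + lam * b ^ p.toReal) ^ (1 / p.toReal)

/-- `(X,d,μ)` satisfies `BM(p)`. -/
def SatisfiesBM {X : Type*} [MeasurableSpace X] (d : X → X → ℝ) (μ : Measure X)
    (p : EReal) : Prop :=
  ∀ lam : ℝ, lam ∈ Ioo (0:ℝ) 1 → ∀ A B C : Set X, A.Nonempty → B.Nonempty →
    MeasurableSet A → MeasurableSet B → MeasurableSet C →
    μ A ≠ 0 → μ B ≠ 0 → starComb d lam A B ⊆ C →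
    Mp p lam (μ A) (μ B) ≤ μ C

/-- `(X,d,μ)` satisfies the general (linear) inequality `B̄M(1)`:
`μ(C) ≥ (1-λ)μ(A) + λμ(B)` for all nonempty measurable `A, B, C` with
`C ⊇ (1-λ)A ⋆ λB`. -/
def SatisfiesBMbarLinear {X : Type*} [MeasurableSpace X] (d : X → X → ℝ)
    (μ : Measure X) : Prop :=
  ∀ lam : ℝ, lam ∈ Ioo (0:ℝ) 1 → ∀ A B C : Set X, A.Nonempty → B.Nonempty →
    MeasurableSet A → MeasurableSet B → MeasurableSet C →
    starComb d lam A B ⊆ C →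
    ENNReal.ofReal (1 - lam) * μ A + ENNReal.ofReal lam * μ B ≤ μ C

/-- `(X,d,μ)` satisfies the general inequality `B̄M(p)` for a real `p > 0`:
`μ(C) ≥ ((1-λ)μ(A)^p + λμ(B)^p)^{1/p}` for all nonempty measurable `A, B, C`
with `C ⊇ (1-λ)A ⋆ λB`. -/
def SatisfiesBMbarPos {X : Type*} [MeasurableSpace X] (d : X → X → ℝ) (μ : Measure X)
    (p : ℝ) : Prop :=
  ∀ lam : ℝ, lam ∈ Ioo (0:ℝ) 1 → ∀ A B C : Set X, A.Nonempty → B.Nonempty →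
    MeasurableSet A → MeasurableSet B → MeasurableSet C →
    starComb d lam A B ⊆ C →
    (ENNReal.ofReal (1 - lam) * μ A ^ p + ENNReal.ofReal lam * μ B ^ p) ^ (1/p) ≤ μ C

/-- `(X,d,μ)` satisfies the weighted inequality `BM(p,q)`:
`μ(C)^p ≥ (1-λ)^q μ(A)^p + λ^q μ(B)^p` for all nonempty measurable sets of positive
measure with `C ⊇ (1-λ)A ⋆ λB`. -/
def SatisfiesBMW {X : Type*} [MeasurableSpace X] (d : X → X → ℝ) (μ : Measure X)
    (p q : ℝ) : Prop :=
  ∀ lam : ℝ, lam ∈ Ioo (0:ℝ) 1 → ∀ A B C : Set X, A.Nonempty → B.Nonempty →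
    MeasurableSet A → MeasurableSet B → MeasurableSet C →
    μ A ≠ 0 → μ B ≠ 0 → starComb d lam A B ⊆ C →
    ENNReal.ofReal ((1 - lam) ^ q) * μ A ^ p + ENNReal.ofReal (lam ^ q) * μ B ^ p ≤ μ C ^ p

/-- `(X,d,μ)` satisfies the Prékopa–Leindler inequality `PL`. -/
def SatisfiesPL {X : Type*} [MeasurableSpace X] (d : X → X → ℝ) (μ : Measure X) : Prop :=
  ∀ lam : ℝ, lam ∈ Ioo (0:ℝ) 1 → ∀ f g h : X → ℝ≥0∞,
    Measurable f → Measurable g → Measurable h →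
    (∀ x y z : X, d z x = lam * d x y → d z y = (1 - lam) * d x y →
      f x ^ (1 - lam) * g y ^ lam ≤ h z) →
    (∫⁻ x, f x ∂μ) ^ (1 - lam) * (∫⁻ x, g x ∂μ) ^ lam ≤ ∫⁻ x, h x ∂μ

open Classical in
/-- `(X,d,μ)` satisfies the Borell–Brascamp–Lieb inequality `BBL(p,m)`. -/
def SatisfiesBBL {X : Type*} [MeasurableSpace X] (d : X → X → ℝ) (μ : Measure X)
    (p m : ℝ) : Prop :=
  ∀ lam : ℝ, lam ∈ Ioo (0:ℝ) 1 → ∀ f g h : X → ℝ≥0∞,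
    Measurable f → Measurable g → Measurable h →
    (∀ x y z : X, d z x = lam * d x y → d z y = (1 - lam) * d x y →
      Mp (p : EReal) lam (f x) (g y) ≤ h z) →
    Mp (if m * p + 1 = 0 then (⊥ : EReal) else ((p / (m * p + 1) : ℝ) : EReal)) lam
      (∫⁻ x, f x ∂μ) (∫⁻ x, g x ∂μ) ≤ ∫⁻ x, h x ∂μ

/-- `φ : ℝ → ℝ` is positively decreasing: `t ↦ φ(t)` and `t ↦ φ(-t)` are
non-increasing on `[0,∞)`. -/
def PositivelyDecreasing (φ : ℝ → ℝ) : Prop :=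
  (∀ s t : ℝ, 0 ≤ s → s ≤ t → φ t ≤ φ s) ∧ (∀ s t : ℝ, 0 ≤ s → s ≤ t → φ (-t) ≤ φ (-s))

/-- A set `A ⊆ ℝⁿ` is weakly unconditional. -/
def WeaklyUnconditional {n : ℕ} (A : Set (Fin n → ℝ)) : Prop :=
  ∀ x ∈ A, ∀ ε : Fin n → ℝ, (∀ i, ε i = 0 ∨ ε i = 1) → (fun i => ε i * x i) ∈ A

/-- A nonnegative function on a real vector space is `p`-concave. -/
def PConcaveFn {E : Type*} [AddCommGroup E] [Module ℝ E] (p : EReal) (φ : E → ℝ) : Prop :=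
  ∀ x y : E, ∀ lam : ℝ, lam ∈ Ioo (0:ℝ) 1 →
    MpR p lam (φ x) (φ y) ≤ φ ((1 - lam) • x + lam • y)

/-- A function on a real vector space is radially decreasing. -/
def RadiallyDecreasing {E : Type*} [AddCommGroup E] [Module ℝ E] (φ : E → ℝ) : Prop :=
  ∀ x : E, ∀ t : ℝ, t ∈ Icc (0:ℝ) 1 → φ x ≤ φ (t • x)

/-!
If `h((1-l)x + ly) ≥ M_{-1/n}(f(x), g(y))`, then by the Borell–Brascamp–Lieb inequality in dimension
`n - 1` the integrals `F`, `G`, `K` of `f`, `g`, `h` over the translates of `H` satisfy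
`K((1-l)s + lt) ≥ min(F(s), G(t))`. When `F` and `G` have the same supremum, their superlevel sets
are nonempty for the same levels, so the one-dimensional Brunn–Minkowski inequality for these sets
and the layer-cake formula give `∫ h ≥ (1-l) ∫ f + l ∫ g`; for restrictions of the density `φ` this
reads `μ((1-l)A + lB') ≥ (1-l) μ(A) + l μ(B')`.

Take `B' = t₀B`, `s = 1 - λ + λ/t₀ ≤ 1` and `l = λ/(t₀s)`, so that
`(1-λ)A + λB = s((1-l)A + lB')`. Shrinking by `s` costs at most a factor `sⁿ` because `φ` is
radially decreasing, and concavity of `x ↦ x^(1/n)` finishes the proof.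
-/

section RealMeans

variable {w₁ w₂ a b q r : ℝ}

lemma geom_mean_rpow_rpow_one_div (hq : q ≠ 0) (ha : 0 ≤ a) (hb : 0 ≤ b) :
    ((a ^ q) ^ w₁ * (b ^ q) ^ w₂) ^ (1 / q) = a ^ w₁ * b ^ w₂ := by
  have cancel {c w : ℝ} (hc : 0 ≤ c) : ((c ^ q) ^ w) ^ (1 / q) = c ^ w := by
    rw [← Real.rpow_mul hc, ← Real.rpow_mul hc]
    field_simp
  rw [Real.mul_rpow (by positivity) (by positivity), cancel ha, cancel hb]

lemma rpow_mean_le_geom_mean_of_neg (hw₁ : 0 ≤ w₁) (hw₂ : 0 ≤ w₂) (hw : w₁ + w₂ = 1)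
    (ha : 0 < a) (hb : 0 < b) (hq : q < 0) :
    (w₁ * a ^ q + w₂ * b ^ q) ^ (1 / q) ≤ a ^ w₁ * b ^ w₂ := by
  rw [← geom_mean_rpow_rpow_one_div hq.ne ha.le hb.le]
  exact Real.rpow_le_rpow_of_nonpos (by positivity)
    (Real.geom_mean_le_arith_mean2_weighted hw₁ hw₂ (by positivity) (by positivity) hw)
    (one_div_neg.2 hq).le

lemma geom_mean_le_rpow_mean_of_pos (hw₁ : 0 ≤ w₁) (hw₂ : 0 ≤ w₂) (hw : w₁ + w₂ = 1)
    (ha : 0 ≤ a) (hb : 0 ≤ b) (hq : 0 < q) :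
    a ^ w₁ * b ^ w₂ ≤ (w₁ * a ^ q + w₂ * b ^ q) ^ (1 / q) := by
  rw [← geom_mean_rpow_rpow_one_div hq.ne' ha hb]
  exact Real.rpow_le_rpow (by positivity)
    (Real.geom_mean_le_arith_mean2_weighted hw₁ hw₂ (by positivity) (by positivity) hw)
    (one_div_pos.2 hq).le

lemma geom_mean_le_max (hw₁ : 0 ≤ w₁) (hw₂ : 0 ≤ w₂) (hw : w₁ + w₂ = 1)
    (ha : 0 ≤ a) (hb : 0 ≤ b) : a ^ w₁ * b ^ w₂ ≤ max a b :=
  calc a ^ w₁ * b ^ w₂ ≤ max a b ^ w₁ * max a b ^ w₂ := by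
        gcongr
        exacts [le_max_left a b, le_max_right a b]
    _ = max a b := by
        rw [← Real.rpow_add_of_nonneg (le_max_of_le_left ha) hw₁ hw₂, hw, Real.rpow_one]

lemma rpow_mean_le_rpow_mean_of_neg (hw₁ : 0 ≤ w₁) (hw₂ : 0 ≤ w₂) (hw : w₁ + w₂ = 1)
    (ha : 0 < a) (hb : 0 < b) (hqr : q ≤ r) (hr : r < 0) :
    (w₁ * a ^ q + w₂ * b ^ q) ^ (1 / q) ≤ (w₁ * a ^ r + w₂ * b ^ r) ^ (1 / r) := by
  have hq : q < 0 := hqr.trans_lt hr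
  have hone : 1 ≤ q / r := by rwa [le_div_iff_of_neg hr, one_mul]
  have split {c : ℝ} (hc : 0 < c) : (c ^ r) ^ (q / r) = c ^ q := by
    rw [← Real.rpow_mul hc.le, mul_div_cancel₀ q hr.ne]
  have jensen : (w₁ * a ^ r + w₂ * b ^ r) ^ (q / r) ≤ w₁ * a ^ q + w₂ * b ^ q := by
    simpa only [smul_eq_mul, split ha, split hb] using
      (convexOn_rpow hone).2 (mem_Ici.2 (Real.rpow_nonneg ha.le r))
        (mem_Ici.2 (Real.rpow_nonneg hb.le r)) hw₁ hw₂ hw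
  have hpos : 0 < w₁ * a ^ r + w₂ * b ^ r := by
    rcases hw₁.eq_or_lt with rfl | hw₁
    · obtain rfl : w₂ = 1 := by linarith
      positivity
    · positivity
  calc (w₁ * a ^ q + w₂ * b ^ q) ^ (1 / q)
      ≤ ((w₁ * a ^ r + w₂ * b ^ r) ^ (q / r)) ^ (1 / q) :=
        Real.rpow_le_rpow_of_nonpos (by positivity) jensen (one_div_neg.2 hq).le
    _ = (w₁ * a ^ r + w₂ * b ^ r) ^ (1 / r) := by
        rw [← Real.rpow_mul hpos.le, mul_one_div, div_div_cancel_left' hq.ne, one_div]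

lemma MpR_coe_le_MpR_of_neg {p : EReal} {lam : ℝ} (hlam : lam ∈ Ioo (0 : ℝ) 1) (hq : q < 0)
    (hqp : (q : EReal) ≤ p) (ha : 0 ≤ a) (hb : 0 ≤ b) : MpR q lam a b ≤ MpR p lam a b := by
  by_cases h0 : a = 0 ∨ b = 0
  · simp only [MpR, if_pos h0, le_refl]
  replace ha : 0 < a := ha.lt_of_ne' (not_or.1 h0).1
  replace hb : 0 < b := hb.lt_of_ne' (not_or.1 h0).2
  have hw₁ : 0 ≤ 1 - lam := sub_nonneg.2 hlam.2.le
  have hw₂ : 0 ≤ lam := hlam.1.le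
  have hw : 1 - lam + lam = 1 := sub_add_cancel 1 lam
  have hgeom := rpow_mean_le_geom_mean_of_neg hw₁ hw₂ hw ha hb hq
  have hMq : MpR q lam a b = ((1 - lam) * a ^ q + lam * b ^ q) ^ (1 / q) := by
    simp [MpR, h0, hq.ne]
  rw [hMq]
  induction p with
  | bot => exact absurd hqp (not_le.2 (EReal.bot_lt_coe q))
  | top =>
    simpa [MpR, h0] using hgeom.trans (geom_mean_le_max hw₁ hw₂ hw ha.le hb.le)
  | coe r =>
    rcases lt_trichotomy r 0 with hr | rfl | hr
    · simpa [MpR, h0, hr.ne] using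
        rpow_mean_le_rpow_mean_of_neg hw₁ hw₂ hw ha hb (EReal.coe_le_coe_iff.1 hqp) hr
    · simpa [MpR, h0] using hgeom
    · simpa [MpR, h0, hr.ne'] using
        hgeom.trans (geom_mean_le_rpow_mean_of_pos hw₁ hw₂ hw ha.le hb.le hr)

end RealMeans

section ENNRealMeans

variable {lam p : ℝ} {a b c d : ℝ≥0∞}

lemma ofReal_one_sub_add_ofReal (hlam : lam ∈ Ioo (0 : ℝ) 1) :
    ENNReal.ofReal (1 - lam) + ENNReal.ofReal lam = 1 := by
  rw [← ENNReal.ofReal_add (sub_nonneg.2 hlam.2.le) hlam.1.le, sub_add_cancel, ENNReal.ofReal_one]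

lemma Mp_coe_of_neg (hlam : lam ∈ Ioo (0 : ℝ) 1) (hp : p < 0) (a b : ℝ≥0∞) :
    Mp p lam a b =
      (ENNReal.ofReal (1 - lam) * a ^ p + ENNReal.ofReal lam * b ^ p) ^ (1 / p) := by
  rcases eq_or_ne a 0 with rfl | ha
  · simp [Mp, hlam.2, hp, ENNReal.mul_top, ENNReal.zero_rpow_of_neg]
  rcases eq_or_ne b 0 with rfl | hb
  · simp [Mp, hlam.1, hp, ENNReal.mul_top, ENNReal.zero_rpow_of_neg]
  · simp [Mp, ha, hb, hp.ne]

@[simp]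
lemma Mp_zero_left (p : EReal) (lam : ℝ) (b : ℝ≥0∞) : Mp p lam 0 b = 0 := by simp [Mp]

@[simp]
lemma Mp_zero_right (p : EReal) (lam : ℝ) (a : ℝ≥0∞) : Mp p lam a 0 = 0 := by simp [Mp]

lemma ennreal_rpow_le_rpow_of_nonpos (hp : p ≤ 0) (hab : a ≤ b) : b ^ p ≤ a ^ p := by
  rw [← neg_neg p, ENNReal.rpow_neg, ENNReal.rpow_neg a]
  exact ENNReal.inv_le_inv.2 (ENNReal.rpow_le_rpow hab (neg_nonneg.2 hp))

lemma Mp_le_Mp (hlam : lam ∈ Ioo (0 : ℝ) 1) (hp : p < 0) (hac : a ≤ c) (hbd : b ≤ d) :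
    Mp p lam a b ≤ Mp p lam c d := by
  simp only [Mp_coe_of_neg hlam hp]
  exact ennreal_rpow_le_rpow_of_nonpos (one_div_neg.2 hp).le <| add_le_add
    (mul_le_mul_right (ennreal_rpow_le_rpow_of_nonpos hp.le hac) _)
    (mul_le_mul_right (ennreal_rpow_le_rpow_of_nonpos hp.le hbd) _)

lemma Mp_self (hlam : lam ∈ Ioo (0 : ℝ) 1) (hp : p < 0) (a : ℝ≥0∞) : Mp p lam a a = a := by
  rw [Mp_coe_of_neg hlam hp, ← add_mul, ofReal_one_sub_add_ofReal hlam, one_mul,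
    ← ENNReal.rpow_mul, mul_one_div_cancel hp.ne, ENNReal.rpow_one]

lemma min_le_Mp (hlam : lam ∈ Ioo (0 : ℝ) 1) (hp : p < 0) (a b : ℝ≥0∞) :
    min a b ≤ Mp p lam a b :=
  (Mp_self hlam hp _).symm.trans_le (Mp_le_Mp hlam hp (min_le_left a b) (min_le_right a b))

lemma Mp_le_max (hlam : lam ∈ Ioo (0 : ℝ) 1) (hp : p < 0) (a b : ℝ≥0∞) :
    Mp p lam a b ≤ max a b :=
  (Mp_le_Mp hlam hp (le_max_left a b) (le_max_right a b)).trans_eq (Mp_self hlam hp _)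

lemma Mp_ne_zero (hlam : lam ∈ Ioo (0 : ℝ) 1) (hp : p < 0) (ha : a ≠ 0) (hb : b ≠ 0) :
    Mp p lam a b ≠ 0 :=
  ((lt_min (pos_iff_ne_zero.2 ha) (pos_iff_ne_zero.2 hb)).trans_le (min_le_Mp hlam hp a b)).ne'

lemma Mp_ne_top (hlam : lam ∈ Ioo (0 : ℝ) 1) (hp : p < 0) (ha : a ≠ ⊤) (hb : b ≠ ⊤) :
    Mp p lam a b ≠ ⊤ :=
  ((Mp_le_max hlam hp a b).trans_lt (max_lt ha.lt_top hb.lt_top)).ne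

lemma Mp_mul_left (hlam : lam ∈ Ioo (0 : ℝ) 1) (hp : p < 0) {t : ℝ≥0∞} (ht : t ≠ ⊤)
    (a b : ℝ≥0∞) : Mp p lam (t * a) (t * b) = t * Mp p lam a b := by
  rcases eq_or_ne t 0 with rfl | ht0
  · simp
  rcases eq_or_ne a 0 with rfl | ha
  · simp
  rcases eq_or_ne b 0 with rfl | hb
  · simp
  have rpow_ne_top {x : ℝ≥0∞} (hx : x ≠ 0) : x ^ p ≠ ⊤ := by
    simp [ENNReal.rpow_eq_top_iff, hx, hp.not_gt]
  have hsum : ENNReal.ofReal (1 - lam) * a ^ p + ENNReal.ofReal lam * b ^ p ≠ ⊤ :=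
    ENNReal.add_ne_top.2 ⟨ENNReal.mul_ne_top ENNReal.ofReal_ne_top (rpow_ne_top ha),
      ENNReal.mul_ne_top ENNReal.ofReal_ne_top (rpow_ne_top hb)⟩
  rw [Mp_coe_of_neg hlam hp, Mp_coe_of_neg hlam hp, ENNReal.mul_rpow_of_ne_zero ht0 ha,
    ENNReal.mul_rpow_of_ne_zero ht0 hb, mul_left_comm, mul_left_comm (ENNReal.ofReal lam),
    ← mul_add, ENNReal.mul_rpow_of_ne_top (rpow_ne_top ht0) hsum, ← ENNReal.rpow_mul,
    mul_one_div_cancel hp.ne, ENNReal.rpow_one]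

lemma min_inv_mul_le_inv_Mp_mul_Mp (hlam : lam ∈ Ioo (0 : ℝ) 1) (hp : p < 0) (ha : a ≠ 0)
    (ha' : a ≠ ⊤) (hb : b ≠ 0) (hb' : b ≠ ⊤) (hc : c ≠ ⊤) :
    min (a⁻¹ * c) (b⁻¹ * d) ≤ (Mp p lam a b)⁻¹ * Mp p lam c d := by
  set t := min (a⁻¹ * c) (b⁻¹ * d)
  have ht : t ≠ ⊤ :=
    ne_top_of_le_ne_top (ENNReal.mul_ne_top (ENNReal.inv_ne_top.2 ha) hc) (min_le_left _ _)
  have hta : t * a ≤ c := by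
    rw [← ENNReal.le_div_iff_mul_le (.inl ha) (.inl ha'), ENNReal.div_eq_inv_mul]
    exact min_le_left _ _
  have htb : t * b ≤ d := by
    rw [← ENNReal.le_div_iff_mul_le (.inl hb) (.inl hb'), ENNReal.div_eq_inv_mul]
    exact min_le_right _ _
  rw [← ENNReal.div_eq_inv_mul, ENNReal.le_div_iff_mul_le (.inl (Mp_ne_zero hlam hp ha hb))
    (.inl (Mp_ne_top hlam hp ha' hb')), ← Mp_mul_left hlam hp ht]
  exact Mp_le_Mp hlam hp hta htb

lemma tendsto_Mp (hlam : lam ∈ Ioo (0 : ℝ) 1) (hp : p < 0) {ι : Type*} {l : Filter ι}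
    {u v : ι → ℝ≥0∞} (hu : Tendsto u l (𝓝 a)) (hv : Tendsto v l (𝓝 b)) :
    Tendsto (fun i => Mp p lam (u i) (v i)) l (𝓝 (Mp p lam a b)) := by
  simp only [Mp_coe_of_neg hlam hp]
  exact ((ENNReal.Tendsto.const_mul (hu.ennrpow_const p) (.inr ENNReal.ofReal_ne_top)).add
    (ENNReal.Tendsto.const_mul (hv.ennrpow_const p) (.inr ENNReal.ofReal_ne_top))).ennrpow_const _

lemma rpow_mul_rpow_add_rpow_mul_rpow_le {s t : ℝ} (hs : 0 < s) (ht : 0 < t) (hst : s + t = 1)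
    (x₁ x₂ y₁ y₂ : ℝ≥0∞) :
    x₁ ^ s * y₁ ^ t + x₂ ^ s * y₂ ^ t ≤ (x₁ + x₂) ^ s * (y₁ + y₂) ^ t := by
  have conj : (1 / s).HolderConjugate (1 / t) := by
    rw [Real.holderConjugate_iff, one_lt_div hs]
    exact ⟨by linarith, by simpa using hst⟩
  simpa [ENNReal.rpow_rpow_inv hs.ne', ENNReal.rpow_rpow_inv ht.ne', Fin.sum_univ_two] using
    ENNReal.inner_le_Lp_mul_Lq Finset.univ ![x₁ ^ s, x₂ ^ s] ![y₁ ^ t, y₂ ^ t] conj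

lemma rpow_mul_rpow_div_cancel (hp : p < 0) (hp1 : -1 < p) {w : ℝ≥0∞} (hw : w ≠ 0) (hw' : w ≠ ⊤)
    (ha : a ≠ ⊤) (hc : c ≠ 0) (hc' : c ≠ ⊤) :
    (w * (a * c) ^ (p / (p + 1))) ^ (p + 1) * (w * c) ^ (-p) = w * a ^ p := by
  have hp1' : 0 < p + 1 := by linarith
  have hw_add : w ^ (p + 1) * w ^ (-p) = w := by
    rw [← ENNReal.rpow_add _ _ hw hw', add_neg_cancel_comm, ENNReal.rpow_one]
  have hc_add : c ^ p * c ^ (-p) = 1 := by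
    rw [← ENNReal.rpow_add _ _ hc hc', add_neg_cancel, ENNReal.rpow_zero]
  calc (w * (a * c) ^ (p / (p + 1))) ^ (p + 1) * (w * c) ^ (-p)
      = (w ^ (p + 1) * (a * c) ^ p) * (w ^ (-p) * c ^ (-p)) := by
        rw [ENNReal.mul_rpow_of_nonneg _ _ hp1'.le, ← ENNReal.rpow_mul,
          div_mul_cancel₀ _ hp1'.ne', ENNReal.mul_rpow_of_nonneg _ _ (neg_pos.2 hp).le]
    _ = (w ^ (p + 1) * w ^ (-p)) * a ^ p * (c ^ p * c ^ (-p)) := by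
        rw [ENNReal.mul_rpow_of_ne_top ha hc']
        ring
    _ = w * a ^ p := by rw [hw_add, hc_add, mul_one]

lemma rpow_one_div_le_rpow_mul (hp : p < 0) (hp1 : -1 < p) {x y z : ℝ≥0∞} (hz : z ≠ 0)
    (hz' : z ≠ ⊤) (hle : x ≤ y ^ (p + 1) * z ^ (-p)) :
    y ^ (1 / (p / (p + 1))) ≤ x ^ (1 / p) * z := by
  have hp1' : 0 < p + 1 := by linarith
  have hinv : 1 / p < 0 := one_div_neg.2 hp
  rcases eq_or_ne y ⊤ with rfl | hy
  · rw [ENNReal.top_rpow_of_neg (one_div_neg.2 (div_neg_of_neg_of_pos hp hp1'))]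
    exact zero_le
  calc y ^ (1 / (p / (p + 1))) = (y ^ (p + 1)) ^ (1 / p) * (z ^ (-p)) ^ (1 / p) * z := by
        rw [← ENNReal.rpow_mul, ← ENNReal.rpow_mul, neg_mul, mul_one_div_cancel hp.ne,
          ENNReal.rpow_neg_one, mul_assoc, ENNReal.inv_mul_cancel hz hz', mul_one, one_div_div,
          mul_one_div]
    _ = (y ^ (p + 1) * z ^ (-p)) ^ (1 / p) * z := by
        rw [ENNReal.mul_rpow_of_ne_top (ENNReal.rpow_ne_top_of_nonneg hp1'.le hy)
          (ENNReal.rpow_ne_top_of_ne_zero hz hz')]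
    _ ≤ x ^ (1 / p) * z := mul_le_mul_left (ennreal_rpow_le_rpow_of_nonpos hinv.le hle) z

-- The Hölder inequality with a negative exponent: `(p + 1) / p = 1 / p + 1`.
lemma Mp_mul_mul_le (hlam : lam ∈ Ioo (0 : ℝ) 1) (hp : p < 0) (hp1 : -1 < p)
    (ha : a ≠ 0) (ha' : a ≠ ⊤) (hb : b ≠ 0) (hb' : b ≠ ⊤) (c d : ℝ≥0∞) :
    Mp ((p / (p + 1) : ℝ)) lam (a * c) (b * d) ≤
      Mp p lam a b * (ENNReal.ofReal (1 - lam) * c + ENNReal.ofReal lam * d) := by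
  have hp1' : 0 < p + 1 := by linarith
  have hw₁ : ENNReal.ofReal (1 - lam) ≠ 0 := by simpa using hlam.2
  have hw₂ : ENNReal.ofReal lam ≠ 0 := by simpa using hlam.1
  have hM : Mp p lam a b ≠ 0 := Mp_ne_zero hlam hp ha hb
  rcases eq_or_ne c 0 with rfl | hc
  · simp
  rcases eq_or_ne d 0 with rfl | hd
  · simp
  rcases eq_or_ne c ⊤ with rfl | hc'
  · simp [ENNReal.mul_top hw₁, ENNReal.mul_top hM]
  rcases eq_or_ne d ⊤ with rfl | hd'
  · simp [ENNReal.mul_top hw₂, ENNReal.mul_top hM]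
  rw [Mp_coe_of_neg hlam (div_neg_of_neg_of_pos hp hp1'), Mp_coe_of_neg hlam hp]
  have holder := rpow_mul_rpow_add_rpow_mul_rpow_le hp1' (neg_pos.2 hp) (add_neg_cancel_comm p 1)
    (ENNReal.ofReal (1 - lam) * (a * c) ^ (p / (p + 1)))
    (ENNReal.ofReal lam * (b * d) ^ (p / (p + 1)))
    (ENNReal.ofReal (1 - lam) * c) (ENNReal.ofReal lam * d)
  rw [rpow_mul_rpow_div_cancel hp hp1 hw₁ ENNReal.ofReal_ne_top ha' hc hc',
    rpow_mul_rpow_div_cancel hp hp1 hw₂ ENNReal.ofReal_ne_top hb' hd hd'] at holder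
  refine rpow_one_div_le_rpow_mul hp hp1 ?_ ?_ holder
  · simp [hlam.2, hc]
  · exact ENNReal.add_ne_top.2
      ⟨ENNReal.mul_ne_top ENNReal.ofReal_ne_top hc', ENNReal.mul_ne_top ENNReal.ofReal_ne_top hd'⟩

lemma Mp_ofReal_ofReal (hlam : lam ∈ Ioo (0 : ℝ) 1) (hp : p < 0) {a b : ℝ} (ha : 0 ≤ a)
    (hb : 0 ≤ b) :
    Mp p lam (ENNReal.ofReal a) (ENNReal.ofReal b) = ENNReal.ofReal (MpR p lam a b) := by
  rcases ha.eq_or_lt with rfl | ha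
  · simp [MpR]
  rcases hb.eq_or_lt with rfl | hb
  · simp [MpR]
  have hw₁ : 0 < 1 - lam := sub_pos.2 hlam.2
  have hw₂ : 0 < lam := hlam.1
  have hMpR : MpR p lam a b = ((1 - lam) * a ^ p + lam * b ^ p) ^ (1 / p) := by
    simp [MpR, ha.ne', hb.ne', hp.ne]
  rw [hMpR, Mp_coe_of_neg hlam hp, ENNReal.ofReal_rpow_of_pos ha, ENNReal.ofReal_rpow_of_pos hb,
    ← ENNReal.ofReal_mul hw₁.le, ← ENNReal.ofReal_mul hw₂.le,
    ← ENNReal.ofReal_add (by positivity) (by positivity),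
    ENNReal.ofReal_rpow_of_pos (by positivity)]

lemma PConcaveFn.Mp_ofReal_le {E : Type*} [AddCommGroup E] [Module ℝ E] {r : EReal} {φ : E → ℝ}
    (hφ : PConcaveFn r φ) (hφ0 : ∀ x, 0 ≤ φ x) (hlam : lam ∈ Ioo (0 : ℝ) 1) (hp : p < 0)
    (hpr : (p : EReal) ≤ r) (x y : E) :
    Mp p lam (ENNReal.ofReal (φ x)) (ENNReal.ofReal (φ y)) ≤
      ENNReal.ofReal (φ ((1 - lam) • x + lam • y)) := by
  rw [Mp_ofReal_ofReal hlam hp (hφ0 x) (hφ0 y)]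
  exact ENNReal.ofReal_le_ofReal <|
    (MpR_coe_le_MpR_of_neg hlam hp hpr (hφ0 x) (hφ0 y)).trans (hφ x y lam hlam)

end ENNRealMeans

section Line

lemma volume_add_volume_le_of_isCompact {K L : Set ℝ} (hK : IsCompact K) (hL : IsCompact L)
    (hKne : K.Nonempty) (hLne : L.Nonempty) : volume K + volume L ≤ volume (K + L) := by
  obtain ⟨a, haK, ha⟩ := hK.exists_isGreatest hKne
  obtain ⟨b, hbL, hb⟩ := hL.exists_isLeast hLne
  have hdisj : AEDisjoint volume (b +ᵥ K) (a +ᵥ L) := by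
    refine measure_mono_null (t := {a + b}) ?_ Real.volume_singleton
    rintro _ ⟨⟨x, hx, rfl⟩, y, hy, hxy⟩
    simp only [vadd_eq_add, mem_singleton_iff] at hxy ⊢
    linarith [ha hx, hb hy]
  calc volume K + volume L = volume (b +ᵥ K) + volume (a +ᵥ L) := by
        rw [measure_vadd, measure_vadd]
    _ = volume ((b +ᵥ K) ∪ (a +ᵥ L)) :=
        (measure_union₀ (hL.vadd a).measurableSet.nullMeasurableSet hdisj).symm
    _ ≤ volume (K + L) := by
        refine measure_mono (union_subset ?_ ?_)
        · rintro _ ⟨x, hx, rfl⟩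
          exact ⟨x, hx, b, hbL, add_comm x b⟩
        · rintro _ ⟨y, hy, rfl⟩
          exact ⟨a, haK, y, hy, rfl⟩

lemma volume_add_volume_le {A B : Set ℝ} (hA : MeasurableSet A) (hB : MeasurableSet B)
    (hAne : A.Nonempty) (hBne : B.Nonempty) : volume A + volume B ≤ volume (A + B) := by
  obtain ⟨a, ha⟩ := hAne
  obtain ⟨b, hb⟩ := hBne
  simp only [hA.measure_eq_iSup_isCompact, hB.measure_eq_iSup_isCompact, iSup_and']
  refine ENNReal.biSup_add_biSup_le' ⟨∅, empty_subset A, isCompact_empty⟩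
    ⟨∅, empty_subset B, isCompact_empty⟩ ?_
  rintro K ⟨hKA, hK⟩ L ⟨hLB, hL⟩
  calc volume K + volume L ≤ volume (insert a K) + volume (insert b L) := by
        gcongr <;> exact subset_insert _ _
    _ ≤ volume (insert a K + insert b L) :=
        volume_add_volume_le_of_isCompact (hK.insert a) (hL.insert b) (insert_nonempty a K)
          (insert_nonempty b L)
    _ ≤ volume (A + B) :=
        measure_mono (add_subset_add (insert_subset ha hKA) (insert_subset hb hLB))

lemma volume_Ioi_inter_ofReal_lt (a : ℝ≥0∞) :
    volume (Ioi (0 : ℝ) ∩ {t | ENNReal.ofReal t < a}) = a := by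
  induction a with
  | top => simp
  | coe r =>
    have : Ioi (0 : ℝ) ∩ {t | ENNReal.ofReal t < r} = Ioo 0 (r : ℝ) := by
      ext t
      simp +contextual [ENNReal.ofReal_lt_coe_iff, le_of_lt]
    simp [this]

lemma lintegral_eq_lintegral_measure_ofReal_lt {α : Type*} [MeasurableSpace α] (μ : Measure α)
    [SFinite μ] {f : α → ℝ≥0∞} (hf : Measurable f) :
    ∫⁻ x, f x ∂μ = ∫⁻ t in Ioi (0 : ℝ), μ {x | ENNReal.ofReal t < f x} := by
  have hmeas : MeasurableSet {z : α × ℝ | ENNReal.ofReal z.2 < f z.1} :=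
    measurableSet_lt (by fun_prop) (by fun_prop)
  calc ∫⁻ x, f x ∂μ
      = ∫⁻ x, volume.restrict (Ioi 0) (Prod.mk x ⁻¹' {z : α × ℝ | ENNReal.ofReal z.2 < f z.1}) ∂μ :=
        lintegral_congr fun x => by
          rw [Measure.restrict_apply (measurable_prodMk_left hmeas), inter_comm]
          exact (volume_Ioi_inter_ofReal_lt (f x)).symm
    _ = _ := by rw [← Measure.prod_apply hmeas, Measure.prod_apply_symm hmeas]; rfl

lemma measurable_measure_ofReal_lt {α : Type*} [MeasurableSpace α] (μ : Measure α)
    (f : α → ℝ≥0∞) : Measurable fun t : ℝ => μ {x | ENNReal.ofReal t < f x} :=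
  Antitone.measurable fun _ _ hst =>
    measure_mono fun _ hx => (ENNReal.ofReal_le_ofReal hst).trans_lt hx

variable {lam : ℝ} {f g h : ℝ → ℝ≥0∞}

lemma ofReal_mul_volume_add_le {A B C : Set ℝ} (hlam : lam ∈ Ioo (0 : ℝ) 1)
    (hA : MeasurableSet A) (hB : MeasurableSet B) (hAne : A.Nonempty) (hBne : B.Nonempty)
    (hC : ∀ a ∈ A, ∀ b ∈ B, (1 - lam) * a + lam * b ∈ C) :
    ENNReal.ofReal (1 - lam) * volume A + ENNReal.ofReal lam * volume B ≤ volume C := by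
  have volume_smul {r : ℝ} (hr : 0 ≤ r) (S : Set ℝ) :
      ENNReal.ofReal r * volume S = volume (r • S) := by
    simp [Measure.addHaar_smul_of_nonneg _ hr]
  rw [volume_smul (sub_nonneg.2 hlam.2.le), volume_smul hlam.1.le]
  refine (volume_add_volume_le (hA.const_smul₀ _) (hB.const_smul₀ _) hAne.smul_set
    hBne.smul_set).trans (measure_mono ?_)
  rintro _ ⟨_, ⟨a, ha, rfl⟩, _, ⟨b, hb, rfl⟩, rfl⟩
  exact hC a ha b hb

lemma lintegral_add_lintegral_le_of_min_le (hlam : lam ∈ Ioo (0 : ℝ) 1)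
    (hf : Measurable f) (hg : Measurable g) (hh : Measurable h) (hsup : ⨆ x, f x = ⨆ x, g x)
    (hle : ∀ x y, min (f x) (g y) ≤ h ((1 - lam) * x + lam * y)) :
    ENNReal.ofReal (1 - lam) * (∫⁻ x, f x) + ENNReal.ofReal lam * ∫⁻ x, g x ≤ ∫⁻ x, h x := by
  simp only [lintegral_eq_lintegral_measure_ofReal_lt volume, hf, hg, hh]
  rw [← lintegral_const_mul _ (measurable_measure_ofReal_lt volume f),
    ← lintegral_const_mul _ (measurable_measure_ofReal_lt volume g),
    ← lintegral_add_left ((measurable_measure_ofReal_lt volume f).const_mul _)]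
  refine lintegral_mono fun t => ?_
  by_cases ht : ENNReal.ofReal t < ⨆ x, f x
  · exact ofReal_mul_volume_add_le hlam (measurableSet_lt measurable_const hf)
      (measurableSet_lt measurable_const hg) (lt_iSup_iff.1 ht) (lt_iSup_iff.1 (ht.trans_eq hsup))
      fun x hx y hy => (lt_min hx hy).trans_le (hle x y)
  · have hf_empty : {x | ENNReal.ofReal t < f x} = ∅ :=
      eq_empty_of_forall_notMem fun x hx => ht (hx.trans_le (le_iSup f x))
    have hg_empty : {x | ENNReal.ofReal t < g x} = ∅ :=
      eq_empty_of_forall_notMem fun x hx => ht (hsup ▸ hx.trans_le (le_iSup g x))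
    simp [hf_empty, hg_empty]

lemma tendsto_lintegral_min_natCast {α : Type*} [MeasurableSpace α] (μ : Measure α)
    {f : α → ℝ≥0∞} (hf : Measurable f) :
    Tendsto (fun N : ℕ => ∫⁻ x, min (f x) N ∂μ) atTop (𝓝 (∫⁻ x, f x ∂μ)) := by
  refine lintegral_tendsto_of_tendsto_of_monotone (fun N => (hf.min measurable_const).aemeasurable)
    (ae_of_all _ fun x i j hij => by dsimp only; gcongr) (ae_of_all _ fun x => ?_)
  simpa using (tendsto_const_nhds (x := f x)).min ENNReal.tendsto_nat_nhds_top

-- After dividing `f` and `g` by their suprema `a` and `b`, and `h` by `M_p(a, b)`, the hypothesis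
-- becomes that of `lintegral_add_lintegral_le_of_min_le`.
lemma Mp_lintegral_le_of_iSup_ne_top {p : ℝ} (hlam : lam ∈ Ioo (0 : ℝ) 1) (hp : p < 0)
    (hp1 : -1 < p) (hf : Measurable f) (hg : Measurable g) (hh : Measurable h)
    (hf' : ⨆ x, f x ≠ ⊤) (hg' : ⨆ x, g x ≠ ⊤)
    (hle : ∀ x y, Mp p lam (f x) (g y) ≤ h ((1 - lam) * x + lam * y)) :
    Mp ((p / (p + 1) : ℝ)) lam (∫⁻ x, f x) (∫⁻ x, g x) ≤ ∫⁻ x, h x := by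
  set a := ⨆ x, f x
  set b := ⨆ x, g x
  rcases eq_or_ne a 0 with ha | ha
  · simp [ENNReal.iSup_eq_zero.1 ha]
  rcases eq_or_ne b 0 with hb | hb
  · simp [ENNReal.iSup_eq_zero.1 hb]
  set M := Mp p lam a b
  have hsup : ⨆ x, a⁻¹ * f x = ⨆ x, b⁻¹ * g x := by
    rw [← ENNReal.mul_iSup, ← ENNReal.mul_iSup, ENNReal.inv_mul_cancel ha hf',
      ENNReal.inv_mul_cancel hb hg']
  have normalized (x y : ℝ) :
      min (a⁻¹ * f x) (b⁻¹ * g y) ≤ M⁻¹ * h ((1 - lam) * x + lam * y) :=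
    (min_inv_mul_le_inv_Mp_mul_Mp hlam hp ha hf' hb hg'
      (ne_top_of_le_ne_top hf' (le_iSup f x))).trans (by gcongr; exact hle x y)
  have key := lintegral_add_lintegral_le_of_min_le hlam (hf.const_mul a⁻¹) (hg.const_mul b⁻¹)
    (hh.const_mul M⁻¹) hsup normalized
  rw [lintegral_const_mul _ hf, lintegral_const_mul _ hg, lintegral_const_mul _ hh] at key
  calc Mp ((p / (p + 1) : ℝ)) lam (∫⁻ x, f x) (∫⁻ x, g x)
      = Mp ((p / (p + 1) : ℝ)) lam (a * (a⁻¹ * ∫⁻ x, f x)) (b * (b⁻¹ * ∫⁻ x, g x)) := by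
        rw [ENNReal.mul_inv_cancel_left ha hf', ENNReal.mul_inv_cancel_left hb hg']
    _ ≤ M * (ENNReal.ofReal (1 - lam) * (a⁻¹ * ∫⁻ x, f x)
          + ENNReal.ofReal lam * (b⁻¹ * ∫⁻ x, g x)) :=
        Mp_mul_mul_le hlam hp hp1 ha hf' hb hg' _ _
    _ ≤ M * (M⁻¹ * ∫⁻ x, h x) := by gcongr
    _ = ∫⁻ x, h x :=
        ENNReal.mul_inv_cancel_left (Mp_ne_zero hlam hp ha hb) (Mp_ne_top hlam hp hf' hg')

lemma Mp_lintegral_le_lintegral_real {p : ℝ} (hlam : lam ∈ Ioo (0 : ℝ) 1) (hp : p < 0)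
    (hp1 : -1 < p) (hf : Measurable f) (hg : Measurable g) (hh : Measurable h)
    (hle : ∀ x y, Mp p lam (f x) (g y) ≤ h ((1 - lam) * x + lam * y)) :
    Mp ((p / (p + 1) : ℝ)) lam (∫⁻ x, f x) (∫⁻ x, g x) ≤ ∫⁻ x, h x := by
  have iSup_min_ne_top (u : ℝ → ℝ≥0∞) (N : ℕ) : ⨆ x, min (u x) N ≠ ⊤ :=
    ne_top_of_le_ne_top (ENNReal.natCast_ne_top N) (iSup_le fun x => min_le_right _ _)
  refine le_of_tendsto (tendsto_Mp hlam (div_neg_of_neg_of_pos hp (by linarith))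
    (tendsto_lintegral_min_natCast volume hf) (tendsto_lintegral_min_natCast volume hg))
    (.of_forall fun N => ?_)
  exact Mp_lintegral_le_of_iSup_ne_top hlam hp hp1 (hf.min measurable_const)
    (hg.min measurable_const) hh (iSup_min_ne_top f N) (iSup_min_ne_top g N)
    fun x y => (Mp_le_Mp hlam hp (min_le_left _ _) (min_le_left _ _)).trans (hle x y)

end Line

section FiniteDimensional

variable {lam p : ℝ}

lemma fin_cons_eq_piFinSuccAbove_symm {m : ℕ} (z : ℝ × (Fin m → ℝ)) :
    (Fin.cons z.1 z.2 : Fin (m + 1) → ℝ) =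
      (MeasurableEquiv.piFinSuccAbove (fun _ : Fin (m + 1) => ℝ) 0).symm z := by
  simp [MeasurableEquiv.piFinSuccAbove_symm_apply, Fin.insertNthEquiv]

lemma measurable_fin_cons {m : ℕ} :
    Measurable fun z : ℝ × (Fin m → ℝ) => (Fin.cons z.1 z.2 : Fin (m + 1) → ℝ) := by
  simp only [fin_cons_eq_piFinSuccAbove_symm]
  exact MeasurableEquiv.measurable _

lemma lintegral_fin_succ {m : ℕ} {f : (Fin (m + 1) → ℝ) → ℝ≥0∞} (hf : Measurable f) :
    ∫⁻ x, f x = ∫⁻ s : ℝ, ∫⁻ v : Fin m → ℝ, f (Fin.cons s v) := by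
  have hpres := (volume_preserving_piFinSuccAbove (fun _ : Fin (m + 1) => ℝ) 0).symm
  rw [← hpres.lintegral_comp hf]
  simp only [← fin_cons_eq_piFinSuccAbove_symm]
  exact lintegral_prod _ (hf.comp measurable_fin_cons).aemeasurable

lemma Mp_lintegral_le_lintegral_pi (hlam : lam ∈ Ioo (0 : ℝ) 1) (hp : p < 0) {m : ℕ}
    (hpm : -1 < m * p) {f g h : (Fin m → ℝ) → ℝ≥0∞} (hf : Measurable f) (hg : Measurable g)
    (hh : Measurable h) (hle : ∀ x y, Mp p lam (f x) (g y) ≤ h ((1 - lam) • x + lam • y)) :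
    Mp ((p / (m * p + 1) : ℝ)) lam (∫⁻ x, f x) (∫⁻ x, g x) ≤ ∫⁻ x, h x := by
  induction m with
  | zero =>
    have lintegral_point (u : (Fin 0 → ℝ) → ℝ≥0∞) : ∫⁻ x, u x = u 0 := by
      rw [Measure.volume_pi_eq_dirac (0 : Fin 0 → ℝ), lintegral_dirac]
    simpa [lintegral_point] using hle 0 0
  | succ m ih =>
    push_cast at hpm ⊢
    have hpm' : 0 < m * p + 1 := by linarith
    set q : ℝ := p / (m * p + 1) with hq
    have hq0 : q < 0 := div_neg_of_neg_of_pos hp hpm'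
    have hq1 : -1 < q := by rw [hq, lt_div_iff₀ hpm']; linarith
    have hexp : p / ((m + 1) * p + 1) = q / (q + 1) := by
      rw [hq, div_add_one hpm'.ne', div_div_div_cancel_right₀ hpm'.ne']
      ring_nf
    have inner_meas {u : (Fin (m + 1) → ℝ) → ℝ≥0∞} (hu : Measurable u) (s : ℝ) :
        Measurable fun v : Fin m → ℝ => u (Fin.cons s v) :=
      (hu.comp measurable_fin_cons).comp measurable_prodMk_left
    have outer_meas {u : (Fin (m + 1) → ℝ) → ℝ≥0∞} (hu : Measurable u) :
        Measurable fun s : ℝ => ∫⁻ v : Fin m → ℝ, u (Fin.cons s v) :=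
      (hu.comp measurable_fin_cons).lintegral_prod_right'
    rw [hexp, lintegral_fin_succ hf, lintegral_fin_succ hg, lintegral_fin_succ hh]
    refine Mp_lintegral_le_lintegral_real hlam hq0 hq1 (outer_meas hf) (outer_meas hg)
      (outer_meas hh) fun s t => ?_
    refine ih (by linarith) (inner_meas hf s) (inner_meas hg t) (inner_meas hh _) fun x y => ?_
    refine (hle (Fin.cons s x) (Fin.cons t y)).trans_eq (congrArg h ?_)
    ext i
    cases i using Fin.cases <;> simp

variable {W : Type*} [NormedAddCommGroup W] [NormedSpace ℝ W] [MeasurableSpace W] [BorelSpace W]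

lemma setLIntegral_hausdorffMeasure_translate (K : Submodule ℝ W) {d : ℝ} (hd : 0 ≤ d) (y : W)
    {f : W → ℝ≥0∞} (hf : Measurable f) :
    ∫⁻ z in {z | z - y ∈ K}, f z ∂μH[d] = ∫⁻ z : K, f (y + z) ∂μH[d] := by
  have hiso : Isometry fun z : K => y + (z : W) :=
    (IsometryEquiv.addLeft y).isometry.comp isometry_subtype_coe
  have hrange : {z | z - y ∈ K} = range fun z : K => y + (z : W) := by
    ext z
    exact ⟨fun hz => ⟨⟨z - y, hz⟩, by simp⟩, by rintro ⟨z, rfl⟩; simp⟩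
  rw [hrange, ← hiso.map_hausdorffMeasure (.inl hd), lintegral_map hf hiso.continuous.measurable]

variable [FiniteDimensional ℝ W]

lemma Mp_lintegral_le_lintegral (ν : Measure W) [ν.IsAddHaarMeasure]
    (hlam : lam ∈ Ioo (0 : ℝ) 1) (hp : p < 0) (hpW : -1 < Module.finrank ℝ W * p)
    {f g h : W → ℝ≥0∞} (hf : Measurable f) (hg : Measurable g) (hh : Measurable h)
    (hle : ∀ x y, Mp p lam (f x) (g y) ≤ h ((1 - lam) • x + lam • y)) :
    Mp ((p / (Module.finrank ℝ W * p + 1) : ℝ)) lam (∫⁻ x, f x ∂ν) (∫⁻ x, g x ∂ν) ≤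
      ∫⁻ x, h x ∂ν := by
  let e : (Fin (Module.finrank ℝ W) → ℝ) ≃L[ℝ] W := .ofFinrankEq (by simp)
  have he : Measurable e := e.continuous.measurable
  have lintegral_eq {u : W → ℝ≥0∞} (hu : Measurable u) :
      ∫⁻ x, u x ∂ν = Measure.addHaarScalarFactor ν (Measure.map e volume) * ∫⁻ v, u (e v) := by
    conv_lhs => rw [Measure.isAddLeftInvariant_eq_smul ν (Measure.map e volume)]
    rw [lintegral_smul_measure, lintegral_map hu he]
    rfl
  rw [lintegral_eq hf, lintegral_eq hg, lintegral_eq hh,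
    Mp_mul_left hlam (div_neg_of_neg_of_pos hp (by linarith)) ENNReal.coe_ne_top]
  gcongr
  refine Mp_lintegral_le_lintegral_pi hlam hp hpW (hf.comp he) (hg.comp he) (hh.comp he)
    fun x y => ?_
  simpa using hle (e x) (e y)

lemma exists_lintegral_eq_mul_lintegral_lintegral_of_isCompl {U V : Submodule ℝ W}
    (hUV : IsCompl U V) (μ : Measure W) [μ.IsAddHaarMeasure] (ρ : Measure U) [ρ.IsAddHaarMeasure]
    (ν : Measure V) [ν.IsAddHaarMeasure] :
    ∃ c : ℝ≥0∞, ∀ f : W → ℝ≥0∞, Measurable f →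
      ∫⁻ x, f x ∂μ = c * ∫⁻ u : U, ∫⁻ v : V, f (u + v) ∂ν ∂ρ := by
  let T : (U × V) ≃L[ℝ] W := (Submodule.prodEquivOfIsCompl U V hUV).toContinuousLinearEquiv
  have hT : Measurable T := T.continuous.measurable
  refine ⟨Measure.addHaarScalarFactor μ (Measure.map T (ρ.prod ν)), fun f hf => ?_⟩
  conv_lhs => rw [Measure.isAddLeftInvariant_eq_smul μ (Measure.map T (ρ.prod ν))]
  rw [lintegral_smul_measure, lintegral_map hf hT,
    lintegral_prod (fun z => f (T z)) (hf.comp hT).aemeasurable]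
  simp [T, ENNReal.smul_def]

end FiniteDimensional

section Hyperplane

variable {E : Type*} [NormedAddCommGroup E] [InnerProductSpace ℝ E] [MeasurableSpace E]
  [BorelSpace E]

/-- The supremum over the translates `y + H` of the marginals `μ̃(A ∩ (y + H))` of the measure with
density `f`; the Lebesgue measure of `y + H` is encoded as a Hausdorff measure of the ambient
space. -/
def supMarginal (H : Submodule ℝ E) (f : E → ℝ≥0∞) (A : Set E) : ℝ≥0∞ :=
  ⨆ y : Hᗮ, ∫⁻ z in A ∩ {z | z - (y : E) ∈ H}, f z ∂(μH[(Module.finrank ℝ H : ℝ)])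

lemma supMarginal_eq_iSup_lintegral (H : Submodule ℝ E) {f : E → ℝ≥0∞} (hf : Measurable f)
    {A : Set E} (hA : MeasurableSet A) :
    supMarginal H f A =
      ⨆ y : Hᗮ, ∫⁻ z : H, A.indicator f (y + z) ∂μH[(Module.finrank ℝ H : ℝ)] :=
  iSup_congr fun y => by
    rw [← setLIntegral_indicator hA,
      setLIntegral_hausdorffMeasure_translate H (Nat.cast_nonneg _) y (hf.indicator hA)]

variable [FiniteDimensional ℝ E] {lam : ℝ}

lemma lintegral_add_lintegral_le_of_iSup_lintegral_eq {H : Submodule ℝ E}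
    (hH : Module.finrank ℝ H + 1 = Module.finrank ℝ E) (μ : Measure E) [μ.IsAddHaarMeasure]
    (ν : Measure H) [ν.IsAddHaarMeasure] (hlam : lam ∈ Ioo (0 : ℝ) 1) {f g h : E → ℝ≥0∞}
    (hf : Measurable f) (hg : Measurable g) (hh : Measurable h)
    (hsup : ⨆ y : Hᗮ, ∫⁻ z : H, f (y + z) ∂ν = ⨆ y : Hᗮ, ∫⁻ z : H, g (y + z) ∂ν)
    (hle : ∀ x y, Mp ((-1 / Module.finrank ℝ E : ℝ)) lam (f x) (g y) ≤
      h ((1 - lam) • x + lam • y)) :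
    ENNReal.ofReal (1 - lam) * (∫⁻ x, f x ∂μ) + ENNReal.ofReal lam * ∫⁻ x, g x ∂μ ≤
      ∫⁻ x, h x ∂μ := by
  have hHperp : Module.finrank ℝ Hᗮ = 1 := by
    have := H.finrank_add_finrank_orthogonal
    lia
  let e : ℝ ≃L[ℝ] Hᗮ := .ofFinrankEq (by simp [hHperp])
  have he : Measurable e := e.continuous.measurable
  obtain ⟨c, hc⟩ := exists_lintegral_eq_mul_lintegral_lintegral_of_isCompl
    H.isCompl_orthogonal.symm μ (Measure.map e volume) ν
  have fiber_meas {u : E → ℝ≥0∞} (hu : Measurable u) :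
      Measurable fun y : Hᗮ => ∫⁻ z : H, u (y + z) ∂ν :=
    Measurable.lintegral_prod_right' (f := fun w : Hᗮ × H => u (w.1 + w.2)) (by fun_prop)
  have hE : (Module.finrank ℝ E : ℝ) = Module.finrank ℝ H + 1 := by exact_mod_cast hH.symm
  rw [hE] at hle
  set p : ℝ := -1 / (Module.finrank ℝ H + 1)
  have hp : p < 0 := div_neg_of_neg_of_pos (by norm_num) (by positivity)
  have hpH : -1 < Module.finrank ℝ H * p := by
    rw [mul_div_assoc', lt_div_iff₀ (by positivity)]
    linarith
  rw [hc f hf, hc g hg, hc h hh, mul_left_comm, mul_left_comm (ENNReal.ofReal lam), ← mul_add]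
  gcongr
  simp only [lintegral_map, fiber_meas, hf, hg, hh, he]
  refine lintegral_add_lintegral_le_of_min_le hlam ((fiber_meas hf).comp he)
    ((fiber_meas hg).comp he) ((fiber_meas hh).comp he) ?_ fun s t => ?_
  · simpa [← e.toEquiv.iSup_comp] using hsup
  · refine (min_le_Mp hlam (div_neg_of_neg_of_pos hp (by linarith)) _ _).trans <|
      Mp_lintegral_le_lintegral ν hlam hp hpH (by fun_prop) (by fun_prop) (by fun_prop)
        fun x y => (hle (e s + x) (e t + y)).trans_eq (congrArg h ?_)
    simp only [map_add, ← smul_eq_mul, map_smul, Submodule.coe_add, Submodule.coe_smul]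
    module

lemma withDensity_add_withDensity_le_of_supMarginal_eq {H : Submodule ℝ E}
    (hH : Module.finrank ℝ H + 1 = Module.finrank ℝ E) (μ : Measure E) [μ.IsAddHaarMeasure]
    (hlam : lam ∈ Ioo (0 : ℝ) 1) {f : E → ℝ≥0∞} (hf : Measurable f)
    (hconc : ∀ x y, Mp ((-1 / Module.finrank ℝ E : ℝ)) lam (f x) (f y) ≤
      f ((1 - lam) • x + lam • y))
    {A B : Set E} (hA : MeasurableSet A) (hB : MeasurableSet B)
    (hsup : supMarginal H f A = supMarginal H f B) :
    ENNReal.ofReal (1 - lam) * μ.withDensity f A + ENNReal.ofReal lam * μ.withDensity f B ≤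
      μ.withDensity f ((1 - lam) • A + lam • B) := by
  set C := toMeasurable (μ.withDensity f) ((1 - lam) • A + lam • B)
  have hC : MeasurableSet C := measurableSet_toMeasurable _ _
  rw [← measure_toMeasurable ((1 - lam) • A + lam • B), withDensity_apply f hA,
    withDensity_apply f hB, withDensity_apply f hC, ← lintegral_indicator hA,
    ← lintegral_indicator hB, ← lintegral_indicator hC]
  rw [supMarginal_eq_iSup_lintegral H hf hA, supMarginal_eq_iSup_lintegral H hf hB] at hsup
  refine lintegral_add_lintegral_le_of_iSup_lintegral_eq hH μ _ hlam (hf.indicator hA)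
    (hf.indicator hB) (hf.indicator hC) hsup fun x y => ?_
  by_cases hx : x ∈ A
  swap
  · simp [hx]
  by_cases hy : y ∈ B
  swap
  · simp [hy]
  have hxy : (1 - lam) • x + lam • y ∈ C :=
    subset_toMeasurable _ _ (add_mem_add (smul_mem_smul_set hx) (smul_mem_smul_set hy))
  simpa [hx, hy, hxy] using hconc x y

end Hyperplane

section Dilation

variable {E : Type*} [NormedAddCommGroup E] [NormedSpace ℝ E] [FiniteDimensional ℝ E]
  [MeasurableSpace E] [BorelSpace E] (μ : Measure E) [μ.IsAddHaarMeasure] {f : E → ℝ≥0∞} {s : ℝ}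

lemma ofReal_pow_mul_withDensity_le_withDensity_smul (hs : 0 < s) (hf : ∀ x, f x ≤ f (s • x))
    (D : Set E) :
    ENNReal.ofReal (s ^ Module.finrank ℝ E) * μ.withDensity f D ≤ μ.withDensity f (s • D) := by
  have hemb : MeasurableEmbedding fun x : E => s • x := measurableEmbedding_const_smul₀ hs.ne'
  have hpow : 0 < s ^ Module.finrank ℝ E := by positivity
  have hD : (fun x : E => s • x) ⁻¹' (s • D) = D := preimage_image_eq D hemb.injective
  have change_of_variables : ∫⁻ x in D, f (s • x) ∂μ =
      ENNReal.ofReal (s ^ Module.finrank ℝ E)⁻¹ * ∫⁻ x in s • D, f x ∂μ := by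
    rw [← hemb.lintegral_map, ← congrArg μ.restrict hD, ← hemb.restrict_map,
      Measure.map_addHaar_smul μ hs.ne', abs_of_pos (inv_pos.2 hpow), Measure.restrict_smul,
      lintegral_smul_measure, smul_eq_mul]
  calc ENNReal.ofReal (s ^ Module.finrank ℝ E) * μ.withDensity f D
      = ENNReal.ofReal (s ^ Module.finrank ℝ E) * ∫⁻ x in D, f x ∂μ := by
        rw [withDensity_apply']
    _ ≤ ENNReal.ofReal (s ^ Module.finrank ℝ E) * ∫⁻ x in D, f (s • x) ∂μ := by
        gcongr
        exact hf _
    _ = μ.withDensity f (s • D) := by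
        rw [change_of_variables, withDensity_apply', ← mul_assoc, ← ENNReal.ofReal_mul hpow.le,
          mul_inv_cancel₀ hpow.ne', ENNReal.ofReal_one, one_mul]

lemma ofReal_mul_withDensity_rpow_le_withDensity_smul_rpow (hE : 0 < Module.finrank ℝ E)
    (hs : 0 < s) (hf : ∀ x, f x ≤ f (s • x)) (D : Set E) :
    ENNReal.ofReal s * μ.withDensity f D ^ (1 / (Module.finrank ℝ E : ℝ)) ≤
      μ.withDensity f (s • D) ^ (1 / (Module.finrank ℝ E : ℝ)) := by
  have hroot : ENNReal.ofReal s =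
      ENNReal.ofReal (s ^ Module.finrank ℝ E) ^ (1 / (Module.finrank ℝ E : ℝ)) := by
    rw [ENNReal.ofReal_rpow_of_pos (by positivity), one_div,
      Real.pow_rpow_inv_natCast hs.le hE.ne']
  rw [hroot, ← ENNReal.mul_rpow_of_nonneg _ _ (by positivity)]
  gcongr
  exact ofReal_pow_mul_withDensity_le_withDensity_smul μ hs hf D

lemma exists_dilation_factor_weight {lam t : ℝ} (hlam : lam ∈ Ioo (0 : ℝ) 1) (ht : 1 ≤ t) :
    ∃ s ∈ Ioc (0 : ℝ) 1, ∃ l ∈ Ioo (0 : ℝ) 1, s * (1 - l) = 1 - lam ∧ s * l = lam / t := by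
  have hdiv : 0 < lam / t := div_pos hlam.1 (by linarith)
  have hdiv_le : lam / t ≤ lam := div_le_self hlam.1.le ht
  have hlam1 : lam < 1 := hlam.2
  have hs : 0 < 1 - lam + lam / t := by linarith
  have hmul : (1 - lam + lam / t) * (lam / t / (1 - lam + lam / t)) = lam / t :=
    mul_div_cancel₀ _ hs.ne'
  refine ⟨1 - lam + lam / t, ⟨hs, by linarith⟩, lam / t / (1 - lam + lam / t),
    ⟨div_pos hdiv hs, (div_lt_one hs).2 (by linarith)⟩, ?_, hmul⟩
  rw [mul_one_sub, hmul, add_sub_cancel_right]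

lemma mean_rpow_one_div_le_rpow_one_div_mean {l N : ℝ} (hl : l ∈ Ioo (0 : ℝ) 1) (hN : 1 ≤ N)
    (a b : ℝ≥0∞) :
    ENNReal.ofReal (1 - l) * a ^ (1 / N) + ENNReal.ofReal l * b ^ (1 / N) ≤
      (ENNReal.ofReal (1 - l) * a + ENNReal.ofReal l * b) ^ (1 / N) := by
  have hN0 : 0 < N := by linarith
  rw [one_div, ENNReal.le_rpow_inv_iff hN0]
  simpa only [ENNReal.rpow_inv_rpow hN0.ne'] using
    ENNReal.rpow_arith_mean_le_arith_mean2_rpow (ENNReal.ofReal (1 - l)) (ENNReal.ofReal l)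
      (a ^ N⁻¹) (b ^ N⁻¹) (ofReal_one_sub_add_ofReal hl) hN

end Dilation

theorem statement16_general {E : Type*} [NormedAddCommGroup E] [InnerProductSpace ℝ E]
    [FiniteDimensional ℝ E] [MeasurableSpace E] [BorelSpace E] (ν : Measure E)
    [ν.IsAddHaarMeasure] {p : EReal} (hp : ((-1 / Module.finrank ℝ E : ℝ) : EReal) ≤ p)
    {φ : E → ℝ} (hφ0 : ∀ x, 0 ≤ φ x) (hφmeas : Measurable φ) (hφrad : RadiallyDecreasing φ)
    (hφconc : PConcaveFn p φ) {μ : Measure E}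
    (hμ : μ = ν.withDensity fun x => ENNReal.ofReal (φ x)) {H : Submodule ℝ E}
    (hH : Module.finrank ℝ H + 1 = Module.finrank ℝ E) {lam : ℝ} (hlam : lam ∈ Ioo (0 : ℝ) 1)
    {A B : Set E} (hA : MeasurableSet A) (hB : MeasurableSet B) {t₀ : ℝ} (ht₀ : 1 ≤ t₀)
    (hsup : supMarginal H (fun x => ENNReal.ofReal (φ x)) A =
      supMarginal H (fun x => ENNReal.ofReal (φ x)) (t₀ • B)) :
    ENNReal.ofReal (1 - lam) * μ A ^ (1 / (Module.finrank ℝ E : ℝ))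
      + ENNReal.ofReal (lam / t₀) * μ (t₀ • B) ^ (1 / (Module.finrank ℝ E : ℝ))
      ≤ μ ((1 - lam) • A + lam • B) ^ (1 / (Module.finrank ℝ E : ℝ)) := by
  set n := Module.finrank ℝ E
  have hn0 : 0 < n := hH ▸ Nat.succ_pos _
  have hn : (1 : ℝ) ≤ n := by exact_mod_cast hn0
  obtain ⟨s, ⟨hs0, hs1⟩, l, hl, hsl', hsl⟩ := exists_dilation_factor_weight hlam ht₀
  set D := (1 - l) • A + l • t₀ • B with hD
  have hsD : s • D = (1 - lam) • A + lam • B := by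
    rw [hD, smul_add, smul_smul, smul_smul, smul_smul, hsl', hsl, div_mul_cancel₀ _ (by linarith)]
  have hlinear : ENNReal.ofReal (1 - l) * μ A + ENNReal.ofReal l * μ (t₀ • B) ≤ μ D :=
    hμ ▸ withDensity_add_withDensity_le_of_supMarginal_eq hH ν hl hφmeas.ennreal_ofReal
      (hφconc.Mp_ofReal_le hφ0 hl (div_neg_of_neg_of_pos (by norm_num) (by linarith)) hp)
      hA (hB.const_smul₀ t₀) hsup
  have hdilate : ENNReal.ofReal s * μ D ^ (1 / (n : ℝ)) ≤ μ (s • D) ^ (1 / (n : ℝ)) :=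
    hμ ▸ ofReal_mul_withDensity_rpow_le_withDensity_smul_rpow ν hn0 hs0
      (fun x => ENNReal.ofReal_le_ofReal (hφrad x s ⟨hs0.le, hs1⟩)) D
  calc ENNReal.ofReal (1 - lam) * μ A ^ (1 / (n : ℝ))
        + ENNReal.ofReal (lam / t₀) * μ (t₀ • B) ^ (1 / (n : ℝ))
      = ENNReal.ofReal s * (ENNReal.ofReal (1 - l) * μ A ^ (1 / (n : ℝ))
          + ENNReal.ofReal l * μ (t₀ • B) ^ (1 / (n : ℝ))) := by
        rw [← hsl', ← hsl, ENNReal.ofReal_mul hs0.le, ENNReal.ofReal_mul hs0.le, mul_add,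
          mul_assoc, mul_assoc]
    _ ≤ ENNReal.ofReal s
          * (ENNReal.ofReal (1 - l) * μ A + ENNReal.ofReal l * μ (t₀ • B)) ^ (1 / (n : ℝ)) := by
        gcongr
        exact mean_rpow_one_div_le_rpow_one_div_mean hl hn _ _
    _ ≤ ENNReal.ofReal s * μ D ^ (1 / (n : ℝ)) := by gcongr
    _ ≤ μ ((1 - lam) • A + lam • B) ^ (1 / (n : ℝ)) := hsD ▸ hdilate

/-- Brunn–Minkowski-type inequality for a radially decreasing `p`-concave
density, when `A` and a dilate `t₀B` have equal maximal marginal sections with respect to a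
linear hyperplane `H`. -/
theorem statement16 {n : ℕ} (hn : 0 < n)
    (p : EReal) (hp : ((-1/(n:ℝ) : ℝ) : EReal) ≤ p)
    (φ : EuclideanSpace ℝ (Fin n) → ℝ) (hφ0 : ∀ x, 0 ≤ φ x) (hφmeas : Measurable φ)
    (hφrad : RadiallyDecreasing φ) (hφconc : PConcaveFn p φ)
    (μ : Measure (EuclideanSpace ℝ (Fin n)))
    (hμ : μ = (volume : Measure (EuclideanSpace ℝ (Fin n))).withDensity
      fun x => ENNReal.ofReal (φ x))
    (H : Submodule ℝ (EuclideanSpace ℝ (Fin n))) (hH : Module.finrank ℝ H = n - 1)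
    (lam : ℝ) (hlam : lam ∈ Ioo (0:ℝ) 1)
    (A B : Set (EuclideanSpace ℝ (Fin n)))
    (hAm : MeasurableSet A) (hBm : MeasurableSet B)
    (hCm : MeasurableSet ((1 - lam) • A + lam • B))
    (hord : (⨆ y : Hᗮ, ∫⁻ z in B ∩ {z | z - (y : EuclideanSpace ℝ (Fin n)) ∈ H},
              ENNReal.ofReal (φ z) ∂(μH[((n:ℝ) - 1)]))
          ≤ ⨆ y : Hᗮ, ∫⁻ z in A ∩ {z | z - (y : EuclideanSpace ℝ (Fin n)) ∈ H},
              ENNReal.ofReal (φ z) ∂(μH[((n:ℝ) - 1)]))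
    (t₀ : ℝ) (ht₀ : 1 ≤ t₀)
    (hsup : (⨆ y : Hᗮ, ∫⁻ z in A ∩ {z | z - (y : EuclideanSpace ℝ (Fin n)) ∈ H},
              ENNReal.ofReal (φ z) ∂(μH[((n:ℝ) - 1)]))
          = ⨆ y : Hᗮ, ∫⁻ z in (t₀ • B) ∩ {z | z - (y : EuclideanSpace ℝ (Fin n)) ∈ H},
              ENNReal.ofReal (φ z) ∂(μH[((n:ℝ) - 1)])) :
    ENNReal.ofReal (1 - lam) * μ A ^ (1/(n:ℝ))
      + ENNReal.ofReal (lam / t₀) * μ (t₀ • B) ^ (1/(n:ℝ))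
      ≤ μ ((1 - lam) • A + lam • B) ^ (1/(n:ℝ)) := by
  have hE : Module.finrank ℝ (EuclideanSpace ℝ (Fin n)) = n := finrank_euclideanSpace_fin
  have hdim : (n : ℝ) - 1 = Module.finrank ℝ H := by rw [hH, Nat.cast_pred hn]
  rw [hdim] at hsup
  simpa only [hE] using statement16_general volume (by rwa [hE]) hφ0 hφmeas hφrad hφconc hμ
    (by rw [hE, hH, Nat.sub_add_cancel hn]) hlam hAm hBm ht₀ hsup

end
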